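/- Let (r_k)_{k≥1} and (s_ℓ)_{ℓ≥1} be an admissible pair of sequences. If (r_k + i, s_ℓ − i − 1) = (r_{k'} + j, s_{ℓ'} − j − 1) where k, ℓ, k', ℓ' ≥ 1, 0 ≤ i ≤ s_ℓ − 1 and 0 ≤ j ≤ s_{ℓ'} − 1, then k = k', ℓ = ℓ' and i = j. In other words, the elements of the set F = {(r_k + i, s_ℓ − i − 1) : k, ℓ ≥ 1, 0 ≤ i ≤ s_ℓ − 1} have pairwise distinct parameter representations. -/

import Mathlib

/-!
Adding the two coordinates (plus one) of a point of `F` gives `r k + s ℓ`, so everything rests on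
recovering `k` and `ℓ` from that sum. The interleaved sequence `s 1, r 1, s 2, r 2, …` at least
doubles at every step, so a sum of two of its terms with distinct indices `a < b` lies strictly
between the `b`-th term and the next one. This determines `b`, hence also `a`; parity then tells
which of the two terms comes from `r` and which from `s`.
-/

/-- An *admissible pair of sequences* consists of sequences of natural numbers
`(r k)` and `(s ℓ)` (only the values at indices `k ≥ 1` matter) satisfying:
`s 1 = 2`; `s k < r k < s (k+1)` for all `k ≥ 1`; `s (k+1) > 3 * r k` for all
`k ≥ 1`; and `r k > 2 * s k` for all `k ≥ 1`. -/
def AdmissiblePair (r s : ℕ → ℕ) : Prop :=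
  s 1 = 2 ∧ (∀ k, 1 ≤ k → s k < r k) ∧ (∀ k, 1 ≤ k → r k < s (k + 1)) ∧
    (∀ k, 1 ≤ k → 3 * r k < s (k + 1)) ∧ (∀ k, 1 ≤ k → 2 * s k < r k)

/-- The set `F = {(r k + i, s ℓ - i - 1) : k, ℓ ≥ 1, 0 ≤ i ≤ s ℓ - 1} ⊆ ℕ × ℕ`. -/
def pairSetF (r s : ℕ → ℕ) : Set (ℕ × ℕ) :=
  {p | ∃ k ℓ i : ℕ, 1 ≤ k ∧ 1 ≤ ℓ ∧ i ≤ s ℓ - 1 ∧ p = (r k + i, s ℓ - i - 1)}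

/-- A sequence with positive first term, each of whose terms is at least twice the previous one.
This is the growth condition on the interleaved sequence `s 1, r 1, s 2, r 2, …` under which the
sum of two distinct terms determines their indices. -/
structure AtLeastDoubles {M : Type*} [AddMonoid M] [Preorder M] (u : ℕ → M) : Prop where
  pos_zero : 0 < u 0
  two_nsmul_le_succ (n : ℕ) : 2 • u n ≤ u (n + 1)

namespace AtLeastDoubles

variable {M : Type*} [AddCommMonoid M] [PartialOrder M] [IsOrderedCancelAddMonoid M] {u : ℕ → M}

theorem pos (hu : AtLeastDoubles u) (n : ℕ) : 0 < u n := by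
  induction n with
  | zero => exact hu.pos_zero
  | succ n ih => exact (nsmul_pos ih two_ne_zero).trans_le (hu.two_nsmul_le_succ n)

theorem strictMono (hu : AtLeastDoubles u) : StrictMono u :=
  strictMono_nat_of_lt_succ fun n ↦
    calc
      u n < u n + u n := lt_add_of_pos_left _ (hu.pos n)
      _ = 2 • u n := (two_nsmul _).symm
      _ ≤ u (n + 1) := hu.two_nsmul_le_succ n

theorem add_lt_succ (hu : AtLeastDoubles u) {a b : ℕ} (hab : a < b) : u a + u b < u (b + 1) :=
  calc
    u a + u b < u b + u b := by gcongr; exact hu.strictMono hab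
    _ = 2 • u b := (two_nsmul _).symm
    _ ≤ u (b + 1) := hu.two_nsmul_le_succ b

theorem le_of_add_le_add (hu : AtLeastDoubles u) {a b c d : ℕ} (hcd : c < d)
    (h : u a + u b ≤ u c + u d) : b ≤ d := by
  have hlt : u b < u (d + 1) :=
    (lt_add_of_pos_left _ (hu.pos a)).trans_le h |>.trans (hu.add_lt_succ hcd)
  exact Nat.le_of_lt_succ (hu.strictMono.lt_iff_lt.mp hlt)

theorem eq_and_eq_of_add_eq_add (hu : AtLeastDoubles u) {a b c d : ℕ} (hab : a < b) (hcd : c < d)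
    (h : u a + u b = u c + u d) : a = c ∧ b = d := by
  obtain rfl : b = d := le_antisymm (hu.le_of_add_le_add hcd h.le) (hu.le_of_add_le_add hab h.ge)
  exact ⟨hu.strictMono.injective (add_right_cancel h), rfl⟩

theorem sym2_eq_of_add_eq_add (hu : AtLeastDoubles u) {a b c d : ℕ} (hab : a ≠ b) (hcd : c ≠ d)
    (h : u a + u b = u c + u d) : s(a, b) = s(c, d) := by
  wlog hab' : a < b generalizing a b
  · rw [Sym2.eq_swap]
    exact this hab.symm (by rwa [add_comm]) (hab.lt_or_gt.resolve_left hab')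
  wlog hcd' : c < d generalizing c d
  · rw [Sym2.eq_swap (a := c)]
    exact this hcd.symm (by rwa [add_comm (u d)]) (hcd.lt_or_gt.resolve_left hcd')
  obtain ⟨rfl, rfl⟩ := hu.eq_and_eq_of_add_eq_add hab' hcd' h
  rfl

end AtLeastDoubles

section Interleave

open Stream'

variable {M : Type*} {x y : Stream' M}

theorem atLeastDoubles_get_interleave [AddMonoid M] [Preorder M] (hx : 0 < x.get 0)
    (hxy : ∀ n, 2 • x.get n ≤ y.get n) (hyx : ∀ n, 2 • y.get n ≤ x.get (n + 1)) :
    AtLeastDoubles (x ⋈ y).get where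
  pos_zero := hx
  two_nsmul_le_succ n := by
    obtain ⟨m, rfl | rfl⟩ := n.even_or_odd'
    · rw [get_interleave_left, get_interleave_right]
      exact hxy m
    · rw [get_interleave_right, show 2 * m + 1 + 1 = 2 * (m + 1) from rfl, get_interleave_left]
      exact hyx m

theorem eq_and_eq_of_get_add_get_eq [AddCommMonoid M] [PartialOrder M]
    [IsOrderedCancelAddMonoid M] (h : AtLeastDoubles (x ⋈ y).get) {m n m' n' : ℕ}
    (heq : x.get m + y.get n = x.get m' + y.get n') : m = m' ∧ n = n' := by
  have hpair : s(2 * m, 2 * n + 1) = s(2 * m', 2 * n' + 1) :=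
    h.sym2_eq_of_add_eq_add (by lia) (by lia) (by
      simpa only [get_interleave_left, get_interleave_right] using heq)
  rw [Sym2.eq_iff] at hpair
  lia

end Interleave

theorem pairSetF_parametrization_injective_general (r s : ℕ → ℕ) (hs : 0 < s 1)
    (hsr : ∀ k, 1 ≤ k → 2 * s k ≤ r k) (hrs : ∀ k, 1 ≤ k → 2 * r k ≤ s (k + 1))
    (k ℓ i k' ℓ' j : ℕ) (hk : 1 ≤ k) (hℓ : 1 ≤ ℓ) (hk' : 1 ≤ k') (hℓ' : 1 ≤ ℓ')
    (hi : i ≤ s ℓ - 1) (hj : j ≤ s ℓ' - 1)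
    (heq : ((r k + i, s ℓ - i - 1) : ℕ × ℕ) = (r k' + j, s ℓ' - j - 1)) :
    k = k' ∧ ℓ = ℓ' ∧ i = j := by
  -- `tail` drops the unconstrained values `s 0` and `r 0`.
  have hu : AtLeastDoubles (Stream'.interleave (.tail s) (.tail r)).get :=
    atLeastDoubles_get_interleave hs (fun n ↦ hsr (n + 1) n.succ_pos) fun n ↦ hrs (n + 1) n.succ_pos
  have s_pos (n : ℕ) : 0 < s (n + 1) :=
    (hu.pos (2 * n)).trans_eq (Stream'.get_interleave_left n (.tail s) (.tail r))
  obtain ⟨k, rfl⟩ := Nat.exists_eq_add_of_le' hk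
  obtain ⟨ℓ, rfl⟩ := Nat.exists_eq_add_of_le' hℓ
  obtain ⟨k', rfl⟩ := Nat.exists_eq_add_of_le' hk'
  obtain ⟨ℓ', rfl⟩ := Nat.exists_eq_add_of_le' hℓ'
  obtain ⟨hfst, hsnd⟩ := Prod.mk.inj heq
  have hsum : s (ℓ + 1) + r (k + 1) = s (ℓ' + 1) + r (k' + 1) := by
    have hpos := s_pos ℓ
    have hpos' := s_pos ℓ'
    lia
  obtain ⟨rfl, rfl⟩ := eq_and_eq_of_get_add_get_eq hu hsum
  exact ⟨rfl, rfl, add_left_cancel hfst⟩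

/-- The elements of `F` have pairwise distinct parameter representations: if
`(r k + i, s ℓ - i - 1) = (r k' + j, s ℓ' - j - 1)` with `k, ℓ, k', ℓ' ≥ 1`,
`0 ≤ i ≤ s ℓ - 1` and `0 ≤ j ≤ s ℓ' - 1`, then `k = k'`, `ℓ = ℓ'` and `i = j`. -/
theorem pairSetF_parametrization_injective (r s : ℕ → ℕ) (h : AdmissiblePair r s)
    (k ℓ i k' ℓ' j : ℕ) (hk : 1 ≤ k) (hℓ : 1 ≤ ℓ) (hk' : 1 ≤ k') (hℓ' : 1 ≤ ℓ')
    (hi : i ≤ s ℓ - 1) (hj : j ≤ s ℓ' - 1)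
    (heq : ((r k + i, s ℓ - i - 1) : ℕ × ℕ) = (r k' + j, s ℓ' - j - 1)) :
    k = k' ∧ ℓ = ℓ' ∧ i = j := by
  obtain ⟨hs, -, -, hrs, hsr⟩ := h
  exact pairSetF_parametrization_injective_general r s (by lia) (fun n hn ↦ (hsr n hn).le)
    (fun n hn ↦ by linarith [hrs n hn]) k ℓ i k' ℓ' j hk hℓ hk' hℓ' hi hj heq
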